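/- (4-Bubble Theorem with density |x|.) Let 0 < M₁ ≤ M₂ ≤ M₃ ≤ M₄. Every configuration of 4 regions on ℝ with density |x| whose regions have weighted masses M₁, M₂, M₃, M₄ has total weighted perimeter at least √(2M₁) + √(2M₂) + √(2(M₁+M₃)) + √(2(M₂+M₄)). Moreover, the configuration consisting of the intervals [0, √(2M₁)] (region of mass M₁), [√(2M₁), √(2(M₁+M₃))] (region of mass M₃), [−√(2M₂), 0] (region of mass M₂), and [−√(2(M₂+M₄)), −√(2M₂)] (region of mass M₄) has exactly these weighted masses and total weighted perimeter exactly √(2M₁) + √(2M₂) + √(2(M₁+M₃)) + √(2(M₂+M₄)). -/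

import Mathlib

open MeasureTheory Finset

/-- A configuration of `n` regions made of `k` nondegenerate closed intervals
with pairwise disjoint interiors, each interval labeled by one of the regions. -/
structure Config (n k : ℕ) where
  lo : Fin k → ℝ
  hi : Fin k → ℝ
  lab : Fin k → Fin n
  nondeg : ∀ j, lo j < hi j
  disj : ∀ i j, i ≠ j → Set.Ioo (lo i) (hi i) ∩ Set.Ioo (lo j) (hi j) = ∅

namespace Config

variable {n k : ℕ}

/-- Weighted mass of region `i` with respect to the density `|x|`. -/
noncomputable def mass (C : Config n k) (i : Fin n) : ℝ :=
  ∑ j ∈ univ.filter (fun j => C.lab j = i), ∫ x in C.lo j..C.hi j, |x|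

/-- The (finite) set of all endpoints of intervals of the configuration. -/
noncomputable def endpointSet (C : Config n k) : Finset ℝ :=
  image C.lo univ ∪ image C.hi univ

/-- Total weighted perimeter with respect to the density `|x|`. -/
noncomputable def perim (C : Config n k) : ℝ :=
  ∑ x ∈ C.endpointSet, |x|

/-- A configuration is condensed if the union of its intervals is a closed interval
containing `0` and each region has at most one interval contained in `(-∞,0]`
and at most one interval contained in `[0,∞)`. -/
def Condensed (C : Config n k) : Prop :=
  (∃ a b : ℝ, a ≤ 0 ∧ 0 ≤ b ∧ (⋃ j, Set.Icc (C.lo j) (C.hi j)) = Set.Icc a b) ∧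
  ∀ i : Fin n,
    (univ.filter (fun j => C.lab j = i ∧ C.hi j ≤ 0)).card ≤ 1 ∧
    (univ.filter (fun j => C.lab j = i ∧ 0 ≤ C.lo j)).card ≤ 1

/-- A configuration is isoperimetric if its total weighted perimeter is least among all
configurations of `n` regions with the same list of weighted masses. -/
def Isoperimetric (C : Config n k) : Prop :=
  ∀ (k' : ℕ) (C' : Config n k'), (∀ i, C'.mass i = C.mass i) → C.perim ≤ C'.perim

end Config

/-!
On each half-line, give every region a rim: its endpoint farthest from the origin there, at
distance `0` if it has none. Everything inside the outermost rim of a set `A` of regions on the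
right and of a set `B` on the left encloses at least the total mass of `A ∩ B`, and the mass of
`[0, x]` is `x² / 2`; so the squares of these two rims add up to at least twice the sum of the
`#A + #B - n` smallest masses. Let `V m = M m + M (m - 2) + ⋯`, the mass inside the far end of the
`m`-th interval when the masses are stacked alternately in increasing order. The sum of the `K`
smallest masses is `V (K - 1) + V (K - 2)`, so discarding one outermost rim on each side and
inducting shows that the squares of any `n + K` of the `2 * n` rims sum to at least
`2 * (V 0 + ⋯ + V (K - 1))`. A weak majorization argument passes from this to the inequality between
sums of square roots: the rims sum to at least `√(2 * V 0) + ⋯ + √(2 * V (n - 1))`. In the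
alternating configuration the only endpoints are `0` and the far ends, so the bound is attained.
-/

section AlternateSum

/-- `M m + M (m - 2) + M (m - 4) + ⋯`, down to `M 0` or `M 1`: the mass enclosed by region `m`
on its side of the origin when regions `0, 1, 2, …` are stacked alternately to the right and to
the left. -/
def alternateSum (M : ℕ → ℝ) : ℕ → ℝ
  | 0 => M 0
  | 1 => M 1
  | m + 2 => alternateSum M m + M (m + 2)

variable {M : ℕ → ℝ}

lemma alternateSum_add_alternateSum_succ (m : ℕ) :
    alternateSum M m + alternateSum M (m + 1) = ∑ j ∈ range (m + 2), M j := by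
  induction m with
  | zero => simp [alternateSum, sum_range_succ]
  | succ m ih =>
    rw [sum_range_succ, ← ih, alternateSum]
    ring

lemma sum_range_alternateSum (K : ℕ) :
    ∑ m ∈ range K, alternateSum M m =
      ∑ m ∈ range (K - 2), alternateSum M m + ∑ m ∈ range K, M m := by
  match K with
  | 0 => simp
  | 1 => simp [alternateSum]
  | K + 2 =>
    rw [← alternateSum_add_alternateSum_succ (M := M), Nat.add_sub_cancel, sum_range_succ,
      sum_range_succ, add_assoc]

lemma alternateSum_nonneg (hM : ∀ m, 0 ≤ M m) : ∀ m, 0 ≤ alternateSum M m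
  | 0 => hM 0
  | 1 => hM 1
  | m + 2 => add_nonneg (alternateSum_nonneg hM m) (hM (m + 2))

lemma le_alternateSum (hM : ∀ m, 0 ≤ M m) : ∀ m, M m ≤ alternateSum M m
  | 0 => le_rfl
  | 1 => le_rfl
  | m + 2 => le_add_of_nonneg_left (alternateSum_nonneg hM m)

lemma monotone_alternateSum_add_two_mul (hM : ∀ m, 0 ≤ M m) (i : ℕ) :
    Monotone fun d => alternateSum M (i + 2 * d) :=
  monotone_nat_of_le_succ fun d => le_add_of_nonneg_right (hM (i + 2 * d + 2))

lemma alternateSum_add_le (hM : ∀ m, 0 ≤ M m) {i j : ℕ} (hij : i < j)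
    (hparity : Even i ↔ Even j) : alternateSum M i + M j ≤ alternateSum M j := by
  obtain ⟨d, rfl⟩ : ∃ d, j = i + 2 * d + 2 := ⟨(j - i) / 2 - 1, by grind⟩
  rw [alternateSum]
  gcongr
  exact monotone_alternateSum_add_two_mul hM i (Nat.zero_le d)

end AlternateSum

section PartialSums

lemma sum_range_card_le_sum {M : ℕ → ℝ} (hM : Monotone M) (T : Finset ℕ) :
    ∑ m ∈ range #T, M m ≤ ∑ m ∈ T, M m := by
  induction T using Finset.induction_on_max with
  | empty => simp
  | insert a s hs ih =>
    have ha : a ∉ s := fun h => (hs a h).false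
    have hcard : #s ≤ a := by
      simpa using card_le_card fun x hx => mem_range.2 (hs x hx)
    rw [card_insert_of_notMem ha, sum_range_succ, sum_insert ha, add_comm]
    exact add_le_add (hM hcard) ih

variable {ι : Type*} {s : Finset ι} {p : ι → ℝ} {q : ℕ → ℝ} {N : ℕ}

lemma sum_range_eq_zero_of_sum_sq_nonpos {K : ℕ} (h : ∑ m ∈ range K, q m ^ 2 ≤ 0) :
    ∑ m ∈ range K, q m = 0 := by
  have hnonneg : ∀ m ∈ range K, 0 ≤ q m ^ 2 := fun m _ => sq_nonneg (q m)
  have hzero := (sum_eq_zero_iff_of_nonneg hnonneg).1 (h.antisymm (sum_nonneg hnonneg))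
  exact sum_eq_zero fun m hm => pow_eq_zero_iff two_ne_zero |>.1 (hzero m hm)

lemma sum_range_le_sum_of_sum_sq_le_mul {K : ℕ} {c : ℝ} (hp : ∀ i ∈ s, 0 ≤ p i)
    (hc : ∀ i ∈ s, p i ≤ c) (hc₀ : 0 ≤ c)
    (hsq : ∑ m ∈ range K, q m ^ 2 ≤ ∑ i ∈ s, p i ^ 2)
    (h : ∑ i ∈ s, p i ^ 2 - ∑ m ∈ range K, q m ^ 2 ≤
      2 * c * (∑ i ∈ s, p i - ∑ m ∈ range K, q m)) :
    ∑ m ∈ range K, q m ≤ ∑ i ∈ s, p i := by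
  rcases hc₀.eq_or_lt with rfl | hpos
  · have hp2 : ∑ i ∈ s, p i ^ 2 = 0 := sum_eq_zero fun i hi => by
      simp [(hc i hi).antisymm (hp i hi)]
    rw [sum_range_eq_zero_of_sum_sq_nonpos (hsq.trans hp2.le)]
    exact sum_nonneg hp
  · have hprod := (sub_nonneg.2 hsq).trans h
    exact sub_nonneg.1 ((mul_nonneg_iff_of_pos_left (by positivity)).1 hprod)

lemma sum_sq_sub_sum_sq_le (hp : ∀ i ∈ s, 0 ≤ p i)
    (h : ∀ T ⊆ s, ∑ m ∈ range (#T - N), q m ^ 2 ≤ ∑ i ∈ T, p i ^ 2) {c : ℝ}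
    (hc : ∀ i ∈ s, p i ≤ c) :
    ∑ i ∈ s, p i ^ 2 - ∑ m ∈ range (#s - N), q m ^ 2 ≤
      2 * c * (∑ i ∈ s, p i - ∑ m ∈ range (#s - N), q m) := by
  classical
  induction s using Finset.induction_on_max_value p generalizing c with
  | empty => simp
  | insert a s ha hmax ih =>
    have ih := ih (fun i hi => hp i (mem_insert_of_mem hi))
      (fun T hT => h T (hT.trans (subset_insert a s))) hmax
    have hpa : 0 ≤ p a := hp a (mem_insert_self a s)
    have hpc : p a ≤ c := hc a (mem_insert_self a s)
    have hmax' : ∀ i ∈ insert a s, p i ≤ p a := forall_mem_insert _ _ _ |>.2 ⟨le_rfl, hmax⟩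
    set K := #(insert a s) - N
    obtain ⟨x, hq, hq2⟩ : ∃ x, ∑ m ∈ range K, q m = ∑ m ∈ range (#s - N), q m + x ∧
        ∑ m ∈ range K, q m ^ 2 = ∑ m ∈ range (#s - N), q m ^ 2 + x ^ 2 := by
      rcases lt_or_ge #s N with hN | hN
      · exact ⟨0, by simp [K, ha, Nat.sub_eq_zero_of_le, hN, hN.le]⟩
      · refine ⟨q (#s - N), ?_⟩
        simp only [K, card_insert_of_notMem ha, Nat.sub_add_comm hN, sum_range_succ, and_self]
    have hle : ∑ i ∈ insert a s, p i ^ 2 - ∑ m ∈ range K, q m ^ 2 ≤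
        2 * p a * (∑ i ∈ insert a s, p i - ∑ m ∈ range K, q m) := by
      rw [hq, hq2, sum_insert ha, sum_insert ha]
      have hstep : p a ^ 2 - x ^ 2 ≤ 2 * p a * (p a - x) := by linarith [sq_nonneg (p a - x)]
      linarith
    have hdiff := sum_range_le_sum_of_sum_sq_le_mul hp hmax' hpa (h _ subset_rfl) hle
    exact hle.trans (by gcongr)

lemma sum_range_le_sum_of_sum_sq_le (hp : ∀ i ∈ s, 0 ≤ p i)
    (h : ∀ T ⊆ s, ∑ m ∈ range (#T - N), q m ^ 2 ≤ ∑ i ∈ T, p i ^ 2) :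
    ∑ m ∈ range (#s - N), q m ≤ ∑ i ∈ s, p i :=
  have hle : ∀ i ∈ s, p i ≤ ∑ j ∈ s, p j := fun _ hi => single_le_sum hp hi
  sum_range_le_sum_of_sum_sq_le_mul hp hle (sum_nonneg hp) (h s subset_rfl)
    (sum_sq_sub_sum_sq_le hp h hle)

end PartialSums

/-- The weighted mass of `[0, x]`; it vanishes for `x ≤ 0`. -/
noncomputable def posMass (x : ℝ) : ℝ := max x 0 ^ 2 / 2

lemma monotone_posMass : Monotone posMass := by
  intro x y h
  unfold posMass
  gcongr

lemma posMass_of_nonneg {x : ℝ} (h : 0 ≤ x) : posMass x = x ^ 2 / 2 := by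
  simp [posMass, h]

lemma posMass_of_nonpos {x : ℝ} (h : x ≤ 0) : posMass x = 0 := by
  simp [posMass, h]

lemma posMass_nonneg (x : ℝ) : 0 ≤ posMass x := by
  unfold posMass
  positivity

lemma integral_zero_abs (b : ℝ) : ∫ x in (0 : ℝ)..b, |x| = posMass b - posMass (-b) := by
  rcases le_total 0 b with h | h
  · have : ∫ x in (0 : ℝ)..b, |x| = ∫ x in (0 : ℝ)..b, x :=
      intervalIntegral.integral_congr fun x hx => abs_of_nonneg (Set.uIcc_of_le h ▸ hx).1
    rw [this, integral_id, posMass_of_nonneg h, posMass_of_nonpos (neg_nonpos.2 h)]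
    ring
  · have : ∫ x in (0 : ℝ)..b, |x| = ∫ x in (0 : ℝ)..b, -x :=
      intervalIntegral.integral_congr fun x hx => abs_of_nonpos (Set.uIcc_of_ge h ▸ hx).2
    rw [this, intervalIntegral.integral_neg, integral_id, posMass_of_nonpos h,
      posMass_of_nonneg (neg_nonneg.2 h)]
    ring

lemma integral_abs (a b : ℝ) :
    ∫ x in a..b, |x| = (posMass b - posMass a) + (posMass (-a) - posMass (-b)) := by
  have h : ∀ c d : ℝ, IntervalIntegrable (fun x : ℝ => |x|) volume c d :=
    continuous_abs.intervalIntegrable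
  rw [← intervalIntegral.integral_interval_sub_left (h 0 b) (h 0 a), integral_zero_abs,
    integral_zero_abs]
  ring

namespace Config

variable {n k : ℕ} (C : Config n k)

/-- The configuration with the same intervals in which region `σ i` is renamed `i`. -/
def relabel (σ : Equiv.Perm (Fin n)) : Config n k where
  __ := C
  lab j := σ.symm (C.lab j)

lemma mass_relabel (σ : Equiv.Perm (Fin n)) (i : Fin n) :
    (C.relabel σ).mass i = C.mass (σ i) := by
  simp only [mass, relabel, Equiv.symm_apply_eq]

lemma perim_relabel (σ : Equiv.Perm (Fin n)) : (C.relabel σ).perim = C.perim := rfl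

/-- The mirror image of a configuration under `x ↦ -x`. -/
def reflect : Config n k where
  lo j := -C.hi j
  hi j := -C.lo j
  lab := C.lab
  nondeg j := neg_lt_neg (C.nondeg j)
  disj i j hij := by
    rw [← Set.neg_Ioo, ← Set.neg_Ioo, ← Set.inter_neg, C.disj i j hij, Set.neg_empty]

lemma endpointSet_reflect : C.reflect.endpointSet = C.endpointSet.image Neg.neg := by
  simp only [endpointSet, reflect, image_union, image_image]
  exact union_comm _ _

/-- The weighted mass of the part of region `i` in `[0, ∞)`. -/
noncomputable def rightMass (i : Fin n) : ℝ :=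
  ∑ j ∈ univ.filter (fun j => C.lab j = i), (posMass (C.hi j) - posMass (C.lo j))

lemma mass_eq_rightMass_add (i : Fin n) :
    C.mass i = C.rightMass i + C.reflect.rightMass i := by
  simp only [mass, integral_abs, sum_add_distrib]
  rfl

lemma rightMass_nonneg (i : Fin n) : 0 ≤ C.rightMass i :=
  sum_nonneg fun j _ => sub_nonneg.2 (monotone_posMass (C.nondeg j).le)

/-- The part of the weighted perimeter carried by `[0, ∞)`. -/
noncomputable def rightPerim : ℝ :=
  ∑ x ∈ C.endpointSet, max x 0

lemma perim_eq_rightPerim_add : C.perim = C.rightPerim + C.reflect.rightPerim := by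
  rw [perim, rightPerim, rightPerim, endpointSet_reflect, sum_image neg_injective.injOn,
    ← sum_add_distrib]
  exact sum_congr rfl fun x _ => (posPart_add_negPart x).symm

/-- The distance from the origin to the rightmost endpoint of region `i` in `[0, ∞)`, or `0` if
there is none. -/
noncomputable def rightEnd (i : Fin n) : ℝ :=
  (insert 0 ((univ.filter fun j => C.lab j = i).image C.hi)).max' (insert_nonempty _ _)

lemma rightEnd_nonneg (i : Fin n) : 0 ≤ C.rightEnd i :=
  le_max' _ _ (mem_insert_self _ _)

lemma hi_le_rightEnd (j : Fin k) : C.hi j ≤ C.rightEnd (C.lab j) :=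
  le_max' _ _ (mem_insert_of_mem (mem_image_of_mem _ (by simp)))

lemma exists_hi_eq_rightEnd {i : Fin n} (hi : C.rightEnd i ≠ 0) :
    ∃ j, C.lab j = i ∧ C.hi j = C.rightEnd i := by
  have hmem : C.rightEnd i ∈ insert 0 ((univ.filter fun j => C.lab j = i).image C.hi) :=
    max'_mem _ _
  simpa [hi] using hmem

lemma hi_le_lo {i j : Fin k} (hij : i ≠ j) (h : C.hi i ≤ C.hi j) : C.hi i ≤ C.lo j := by
  have hempty := C.disj i j hij
  rw [Set.Ioo_inter_Ioo, Set.Ioo_eq_empty_iff, not_lt, inf_eq_left.2 h, le_sup_iff] at hempty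
  exact hempty.resolve_left (C.nondeg i).not_ge

lemma hi_injective : Function.Injective C.hi := fun i j h => by
  by_contra hij
  exact (C.hi_le_lo hij h.le).not_gt (h ▸ C.nondeg j)

lemma sum_rightEnd_le_rightPerim : ∑ i, C.rightEnd i ≤ C.rightPerim := by
  have hinj : Set.InjOn C.rightEnd (univ.filter fun i => C.rightEnd i ≠ 0) := by
    intro i hi i' hi' h
    obtain ⟨j, rfl, hj⟩ := C.exists_hi_eq_rightEnd (mem_filter.1 hi).2
    obtain ⟨j', rfl, hj'⟩ := C.exists_hi_eq_rightEnd (mem_filter.1 hi').2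
    rw [C.hi_injective (hj.trans (h.trans hj'.symm))]
  calc ∑ i, C.rightEnd i = ∑ i with C.rightEnd i ≠ 0, max (C.rightEnd i) 0 := by
        simp only [max_eq_left (C.rightEnd_nonneg _), sum_filter_ne_zero]
    _ = ∑ x ∈ (univ.filter fun i => C.rightEnd i ≠ 0).image C.rightEnd, max x 0 :=
        (sum_image (f := fun x => max x 0) hinj).symm
    _ ≤ C.rightPerim := by
        refine sum_le_sum_of_subset_of_nonneg (fun x hx => ?_) fun x _ _ => le_max_right x 0
        obtain ⟨i, hi, rfl⟩ := mem_image.1 hx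
        obtain ⟨j, -, hj⟩ := C.exists_hi_eq_rightEnd (mem_filter.1 hi).2
        exact mem_union_right _ (mem_image.2 ⟨j, mem_univ j, hj⟩)

lemma sum_posMass_le (J : Finset (Fin k)) {t : ℝ} (ht : ∀ j ∈ J, C.hi j ≤ t) :
    ∑ j ∈ J, (posMass (C.hi j) - posMass (C.lo j)) ≤ posMass t := by
  induction J using Finset.induction_on_max_value C.hi generalizing t with
  | empty => simpa using posMass_nonneg t
  | insert a s ha hmax ih =>
    have hs := ih fun j hj => C.hi_le_lo (ne_of_mem_of_not_mem hj ha) (hmax j hj)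
    have hat := monotone_posMass (ht a (mem_insert_self a s))
    rw [sum_insert ha]
    linarith

lemma sum_rightMass_le (I : Finset (Fin n)) {t : ℝ} (ht : ∀ i ∈ I, C.rightEnd i ≤ t) :
    ∑ i ∈ I, C.rightMass i ≤ posMass t := by
  have hfiber : ∑ i ∈ I, C.rightMass i =
      ∑ j with C.lab j ∈ I, (posMass (C.hi j) - posMass (C.lo j)) :=
    sum_fiberwise_eq_sum_filter _ _ _ _
  rw [hfiber]
  exact C.sum_posMass_le _ fun j hj => (C.hi_le_rightEnd j).trans (ht _ (mem_filter.1 hj).2)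

lemma exists_two_mul_sum_rightMass_le {I : Finset (Fin n)} (hI : I.Nonempty) :
    ∃ i ∈ I, 2 * ∑ j ∈ I, C.rightMass j ≤ C.rightEnd i ^ 2 := by
  obtain ⟨i, hi, hmax⟩ := exists_max_image I C.rightEnd hI
  have h := C.sum_rightMass_le I hmax
  rw [posMass_of_nonneg (C.rightEnd_nonneg i)] at h
  exact ⟨i, hi, by linarith⟩

section LowerBound

variable {C} {M : ℕ → ℝ} (hM : Monotone M) (hM₀ : 0 ≤ M 0) (hC : ∀ i : Fin n, C.mass i = M i)

include hC in
lemma sum_inter_le_sum_rightMass_add (A B : Finset (Fin n)) :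
    ∑ i ∈ A ∩ B, M i ≤ ∑ i ∈ A, C.rightMass i + ∑ i ∈ B, C.reflect.rightMass i := by
  simp only [← hC, mass_eq_rightMass_add, sum_add_distrib]
  exact add_le_add
    (sum_le_sum_of_subset_of_nonneg inter_subset_left fun i _ _ => C.rightMass_nonneg i)
    (sum_le_sum_of_subset_of_nonneg inter_subset_right fun i _ _ => C.reflect.rightMass_nonneg i)

include hM hM₀ in
lemma sum_range_le_sum_inter (A B : Finset (Fin n)) :
    ∑ m ∈ range (#A + #B - n), M m ≤ ∑ i ∈ A ∩ B, M i := by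
  have hcard : #A + #B - n ≤ #(A ∩ B) := by
    have := card_union_add_card_inter A B
    have := card_finset_fin_le (A ∪ B)
    lia
  calc ∑ m ∈ range (#A + #B - n), M m ≤ ∑ m ∈ range #(A ∩ B), M m :=
        sum_le_sum_of_subset_of_nonneg (range_mono hcard)
          fun m _ _ => hM₀.trans (hM (Nat.zero_le m))
    _ ≤ ∑ i ∈ A ∩ B, M i := by
        simpa using sum_range_card_le_sum hM ((A ∩ B).map Fin.valEmbedding)

include hM hM₀ hC

lemma exists_two_mul_sum_range_le {A B : Finset (Fin n)} (hA : A.Nonempty) (hB : B.Nonempty) :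
    ∃ i ∈ A, ∃ j ∈ B, 2 * ∑ m ∈ range (#A + #B - n), M m ≤
      C.rightEnd i ^ 2 + C.reflect.rightEnd j ^ 2 := by
  obtain ⟨i, hi, hleA⟩ := C.exists_two_mul_sum_rightMass_le hA
  obtain ⟨j, hj, hleB⟩ := C.reflect.exists_two_mul_sum_rightMass_le hB
  exact ⟨i, hi, j, hj, by
    linarith [sum_range_le_sum_inter hM hM₀ A B, sum_inter_le_sum_rightMass_add hC A B]⟩

lemma two_mul_sum_range_alternateSum_le (A B : Finset (Fin n)) :
    2 * ∑ m ∈ range (#A + #B - n), alternateSum M m ≤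
      ∑ i ∈ A, C.rightEnd i ^ 2 + ∑ j ∈ B, C.reflect.rightEnd j ^ 2 := by
  induction A using Finset.strongInduction generalizing B with | _ A ih
  have hcardA := card_finset_fin_le A
  have hcardB := card_finset_fin_le B
  rcases le_or_gt (#A + #B) n with hle | hlt
  · rw [Nat.sub_eq_zero_of_le hle, range_zero, sum_empty, mul_zero]
    positivity
  · obtain ⟨i, hi, j, hj, hij⟩ := exists_two_mul_sum_range_le hM hM₀ hC
      (A := A) (B := B) (card_pos.1 (by lia)) (card_pos.1 (by lia))
    have hrest := ih (A.erase i) (erase_ssubset hi) (B.erase j)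
    rw [card_erase_of_mem hi, card_erase_of_mem hj,
      show #A - 1 + (#B - 1) - n = #A + #B - n - 2 by lia] at hrest
    rw [sum_range_alternateSum, ← add_sum_erase A _ hi, ← add_sum_erase B _ hj]
    linarith

lemma sum_sq_sqrt_alternateSum_le (T : Finset (Fin n ⊕ Fin n)) :
    ∑ m ∈ range (#T - n), √(2 * alternateSum M m) ^ 2 ≤
      ∑ i ∈ T, Sum.elim C.rightEnd C.reflect.rightEnd i ^ 2 := by
  have hnonneg := alternateSum_nonneg (M := M) fun m => hM₀.trans (hM (Nat.zero_le m))
  simp_rw [Real.sq_sqrt (mul_nonneg zero_le_two (hnonneg _)), ← mul_sum]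
  rw [← card_toLeft_add_card_toRight, sum_sum_eq_sum_toLeft_add_sum_toRight]
  exact two_mul_sum_range_alternateSum_le hM hM₀ hC T.toLeft T.toRight

theorem sum_sqrt_alternateSum_le_perim :
    ∑ m ∈ range n, √(2 * alternateSum M m) ≤ C.perim := by
  calc ∑ m ∈ range n, √(2 * alternateSum M m)
      ≤ ∑ i, Sum.elim C.rightEnd C.reflect.rightEnd i := by
        have hnonneg : ∀ i ∈ univ, 0 ≤ Sum.elim C.rightEnd C.reflect.rightEnd i := fun i _ =>
          i.casesOn C.rightEnd_nonneg C.reflect.rightEnd_nonneg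
        simpa using sum_range_le_sum_of_sum_sq_le hnonneg fun T _ =>
          sum_sq_sqrt_alternateSum_le hM hM₀ hC T
    _ = ∑ i, C.rightEnd i + ∑ i, C.reflect.rightEnd i := Fintype.sum_sum_type _
    _ ≤ C.rightPerim + C.reflect.rightPerim :=
        add_le_add C.sum_rightEnd_le_rightPerim C.reflect.sum_rightEnd_le_rightPerim
    _ = C.perim := C.perim_eq_rightPerim_add.symm

end LowerBound

end Config

section Alternating

/-- The distance from the origin to the far end of the `m`-th interval when intervals of weighted
masses `M 0, M 1, M 2, …` are stacked alternately to the right and to the left. -/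
noncomputable def outerRadius (M : ℕ → ℝ) (m : ℕ) : ℝ :=
  √(2 * alternateSum M m)

/-- The distance from the origin to the near end of the `m`-th interval when intervals of weighted
masses `M 0, M 1, M 2, …` are stacked alternately to the right and to the left. -/
noncomputable def innerRadius (M : ℕ → ℝ) (m : ℕ) : ℝ :=
  √(2 * (alternateSum M m - M m))

variable {M : ℕ → ℝ}

lemma outerRadius_nonneg (m : ℕ) : 0 ≤ outerRadius M m := Real.sqrt_nonneg _

lemma innerRadius_nonneg (m : ℕ) : 0 ≤ innerRadius M m := Real.sqrt_nonneg _

lemma innerRadius_add_two (m : ℕ) : innerRadius M (m + 2) = outerRadius M m := by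
  simp [innerRadius, outerRadius, alternateSum]

lemma innerRadius_zero : innerRadius M 0 = 0 := by simp [innerRadius, alternateSum]

lemma innerRadius_one : innerRadius M 1 = 0 := by simp [innerRadius, alternateSum]

lemma innerRadius_lt_outerRadius (hM : ∀ m, 0 < M m) (m : ℕ) :
    innerRadius M m < outerRadius M m := by
  have hle := le_alternateSum (fun m => (hM m).le) m
  exact Real.sqrt_lt_sqrt (by linarith) (by linarith [hM m])

lemma outerRadius_le_innerRadius (hM : ∀ m, 0 ≤ M m) {i j : ℕ} (hij : i < j)
    (hparity : Even i ↔ Even j) : outerRadius M i ≤ innerRadius M j := by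
  have hle := alternateSum_add_le hM hij hparity
  exact Real.sqrt_le_sqrt (by linarith)

lemma posMass_outerRadius_sub_posMass_innerRadius (hM : ∀ m, 0 ≤ M m) (m : ℕ) :
    posMass (outerRadius M m) - posMass (innerRadius M m) = M m := by
  have hle := le_alternateSum hM m
  rw [posMass_of_nonneg (outerRadius_nonneg m), posMass_of_nonneg (innerRadius_nonneg m),
    outerRadius, innerRadius, Real.sq_sqrt (by linarith [hM m]), Real.sq_sqrt (by linarith)]
  ring

/-- The end farther from the origin of the `m`-th of the intervals of weighted masses
`M 0, M 1, M 2, …` stacked alternately to the right (even `m`) and to the left (odd `m`) of the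
origin. -/
noncomputable def outerEnd (M : ℕ → ℝ) (m : ℕ) : ℝ :=
  if Even m then outerRadius M m else -outerRadius M m

/-- The end nearer to the origin of the `m`-th of the intervals of weighted masses
`M 0, M 1, M 2, …` stacked alternately to the right (even `m`) and to the left (odd `m`) of the
origin. -/
noncomputable def innerEnd (M : ℕ → ℝ) (m : ℕ) : ℝ :=
  if Even m then innerRadius M m else -innerRadius M m

lemma abs_outerEnd (m : ℕ) : |outerEnd M m| = outerRadius M m := by
  simp only [outerEnd, apply_ite abs, abs_neg, ite_self, abs_of_nonneg (outerRadius_nonneg m)]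

lemma innerEnd_mem_insert_zero_image_outerEnd {m n : ℕ} (hm : m < n) :
    innerEnd M m ∈ insert 0 ((range n).image (outerEnd M)) := by
  match m with
  | 0 => simp [innerEnd, innerRadius_zero]
  | 1 => simp [innerEnd, innerRadius_one]
  | m + 2 =>
    have h : innerEnd M (m + 2) = outerEnd M m := by
      simp [innerEnd, outerEnd, innerRadius_add_two, Nat.even_add]
    rw [h]
    exact mem_insert_of_mem (mem_image_of_mem _ (mem_range.2 (by lia)))

/-- The left endpoint of the `m`-th of the intervals of weighted masses `M 0, M 1, M 2, …`
stacked alternately to the right (even `m`) and to the left (odd `m`) of the origin. -/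
noncomputable def alternatingLo (M : ℕ → ℝ) (m : ℕ) : ℝ :=
  if Even m then innerEnd M m else outerEnd M m

/-- The right endpoint of the `m`-th of the intervals of weighted masses `M 0, M 1, M 2, …`
stacked alternately to the right (even `m`) and to the left (odd `m`) of the origin. -/
noncomputable def alternatingHi (M : ℕ → ℝ) (m : ℕ) : ℝ :=
  if Even m then outerEnd M m else innerEnd M m

lemma alternatingLo_lt_alternatingHi (hM : ∀ m, 0 < M m) (m : ℕ) :
    alternatingLo M m < alternatingHi M m := by
  unfold alternatingLo alternatingHi innerEnd outerEnd
  split_ifs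
  · exact innerRadius_lt_outerRadius hM m
  · exact neg_lt_neg (innerRadius_lt_outerRadius hM m)

lemma integral_alternatingLo_alternatingHi (hM : ∀ m, 0 ≤ M m) (m : ℕ) :
    ∫ x in alternatingLo M m..alternatingHi M m, |x| = M m := by
  have hinner := posMass_of_nonpos (neg_nonpos.2 (innerRadius_nonneg (M := M) m))
  have houter := posMass_of_nonpos (neg_nonpos.2 (outerRadius_nonneg (M := M) m))
  have hmass := posMass_outerRadius_sub_posMass_innerRadius hM m
  unfold alternatingLo alternatingHi innerEnd outerEnd
  split_ifs <;> simp only [integral_abs, neg_neg, hinner, houter] <;> linarith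

lemma Ioo_alternating_inter_eq_empty (hM : ∀ m, 0 ≤ M m) {i j : ℕ} (hij : i ≠ j) :
    Set.Ioo (alternatingLo M i) (alternatingHi M i) ∩
      Set.Ioo (alternatingLo M j) (alternatingHi M j) = ∅ := by
  wlog hlt : i < j generalizing i j
  · rw [Set.inter_comm]
    exact this hij.symm (hij.symm.lt_of_le (not_lt.1 hlt))
  rw [Set.Ioo_inter_Ioo, Set.Ioo_eq_empty_iff, not_lt, inf_le_iff, le_sup_iff, le_sup_iff]
  have hi := innerRadius_nonneg (M := M) i
  have hj := innerRadius_nonneg (M := M) j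
  have hparity := outerRadius_le_innerRadius hM hlt
  unfold alternatingLo alternatingHi innerEnd outerEnd
  grind

/-- The configuration of intervals of weighted masses `M 0, …, M (n - 1)`, in regions
`0, …, n - 1`, stacked alternately to the right and to the left of the origin. The intervals are
listed in the order `π` of their regions. -/
noncomputable def alternatingConfig {n : ℕ} (hM : ∀ m, 0 < M m) (π : Equiv.Perm (Fin n)) :
    Config n n where
  lo j := alternatingLo M (π j)
  hi j := alternatingHi M (π j)
  lab := π
  nondeg j := alternatingLo_lt_alternatingHi hM (π j)
  disj _ _ hij := Ioo_alternating_inter_eq_empty (fun m => (hM m).le)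
    fun h => hij (π.injective (Fin.val_injective h))

variable {n : ℕ} (hM : ∀ m, 0 < M m) (π : Equiv.Perm (Fin n))

lemma mass_alternatingConfig (i : Fin n) : (alternatingConfig hM π).mass i = M i := by
  calc (alternatingConfig hM π).mass i = ∑ j, if π j = i then M (π j) else 0 := by
        simp only [← integral_alternatingLo_alternatingHi fun m => (hM m).le, ← sum_filter]
        rfl
    _ = ∑ l : Fin n, if l = i then M l else 0 := Equiv.sum_comp π fun l => if l = i then M l else 0
    _ = M i := by simp

lemma endpointSet_alternatingConfig_subset :
    (alternatingConfig hM π).endpointSet ⊆ insert 0 ((range n).image (outerEnd M)) := by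
  have hinner (m : Fin n) := innerEnd_mem_insert_zero_image_outerEnd (M := M) m.isLt
  have houter (m : Fin n) : outerEnd M m ∈ insert 0 ((range n).image (outerEnd M)) :=
    mem_insert_of_mem (mem_image_of_mem _ (mem_range.2 m.isLt))
  refine union_subset (image_subset_iff.2 fun j _ => ?_) (image_subset_iff.2 fun j _ => ?_)
  · exact ite_mem.2 ⟨fun _ => hinner (π j), fun _ => houter (π j)⟩
  · exact ite_mem.2 ⟨fun _ => houter (π j), fun _ => hinner (π j)⟩

lemma perim_alternatingConfig_le :
    (alternatingConfig hM π).perim ≤ ∑ m ∈ range n, outerRadius M m := by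
  calc (alternatingConfig hM π).perim ≤ ∑ x ∈ insert 0 ((range n).image (outerEnd M)), |x| :=
        sum_le_sum_of_subset_of_nonneg (endpointSet_alternatingConfig_subset hM π)
          fun x _ _ => abs_nonneg x
    _ = ∑ x ∈ (range n).image (outerEnd M), |x| := sum_insert_zero abs_zero
    _ ≤ ∑ m ∈ range n, |outerEnd M m| := sum_image_le_of_nonneg fun x _ => abs_nonneg x
    _ = ∑ m ∈ range n, outerRadius M m := by simp only [abs_outerEnd]

end Alternating

theorem four_bubble_general {M : ℕ → ℝ} (hM : Monotone M) (hpos : ∀ m, 0 < M m) (n : ℕ) :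
    (∀ (k : ℕ) (C : Config n k), (∃ σ : Equiv.Perm (Fin n), ∀ i, C.mass (σ i) = M i) →
      ∑ m ∈ range n, √(2 * alternateSum M m) ≤ C.perim) ∧
    ∀ π : Equiv.Perm (Fin n), (∀ i, (alternatingConfig hpos π).mass i = M i) ∧
      (alternatingConfig hpos π).perim = ∑ m ∈ range n, √(2 * alternateSum M m) := by
  refine ⟨fun k C ⟨σ, hσ⟩ => ?_, fun π => ?_⟩
  · rw [← C.perim_relabel σ]
    exact Config.sum_sqrt_alternateSum_le_perim hM (hpos 0).le fun i =>
      (C.mass_relabel σ i).trans (hσ i)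
  · have hmass := mass_alternatingConfig hpos π
    exact ⟨hmass, (perim_alternatingConfig_le hpos π).antisymm
      (Config.sum_sqrt_alternateSum_le_perim hM (hpos 0).le hmass)⟩

/-- 4-Bubble Theorem with density `|x|`: every configuration of four regions of
weighted masses `0 < M₁ ≤ M₂ ≤ M₃ ≤ M₄` has total weighted perimeter at least
`√(2M₁) + √(2M₂) + √(2(M₁+M₃)) + √(2(M₂+M₄))`, and the configuration consisting of
`[0, √(2M₁)]` (mass `M₁`), `[√(2M₁), √(2(M₁+M₃))]` (mass `M₃`), `[-√(2M₂), 0]`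
(mass `M₂`), and `[-√(2(M₂+M₄)), -√(2M₂)]` (mass `M₄`) achieves this bound with
exactly these masses. -/
theorem four_bubble (M₁ M₂ M₃ M₄ : ℝ)
    (h₁ : 0 < M₁) (h12 : M₁ ≤ M₂) (h23 : M₂ ≤ M₃) (h34 : M₃ ≤ M₄) :
    (∀ (k : ℕ) (C : Config 4 k),
      (∃ σ : Equiv.Perm (Fin 4), ∀ i, C.mass (σ i) = ![M₁, M₂, M₃, M₄] i) →
      Real.sqrt (2 * M₁) + Real.sqrt (2 * M₂) + Real.sqrt (2 * (M₁ + M₃)) +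
        Real.sqrt (2 * (M₂ + M₄)) ≤ C.perim) ∧
    (∃ C : Config 4 4,
      C.lo 0 = 0 ∧ C.hi 0 = Real.sqrt (2 * M₁) ∧ C.lab 0 = 0 ∧
      C.lo 1 = Real.sqrt (2 * M₁) ∧ C.hi 1 = Real.sqrt (2 * (M₁ + M₃)) ∧ C.lab 1 = 2 ∧
      C.lo 2 = -Real.sqrt (2 * M₂) ∧ C.hi 2 = 0 ∧ C.lab 2 = 1 ∧
      C.lo 3 = -Real.sqrt (2 * (M₂ + M₄)) ∧ C.hi 3 = -Real.sqrt (2 * M₂) ∧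
        C.lab 3 = 3 ∧
      C.mass 0 = M₁ ∧ C.mass 1 = M₂ ∧ C.mass 2 = M₃ ∧ C.mass 3 = M₄ ∧
      C.perim = Real.sqrt (2 * M₁) + Real.sqrt (2 * M₂) +
        Real.sqrt (2 * (M₁ + M₃)) + Real.sqrt (2 * (M₂ + M₄))) := by
  let M : ℕ → ℝ := fun | 0 => M₁ | 1 => M₂ | 2 => M₃ | _ => M₄
  have hM : Monotone M := monotone_nat_of_le_succ fun
    | 0 => h12 | 1 => h23 | 2 => h34 | _ + 3 => le_rfl
  have hpos (m : ℕ) : 0 < M m := h₁.trans_le (hM (Nat.zero_le m))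
  obtain ⟨hlower, hattained⟩ := four_bubble_general hM hpos 4
  obtain ⟨hmass, hperim⟩ := hattained (Equiv.swap 1 2)
  have hsum : ∑ m ∈ range 4, √(2 * alternateSum M m) =
      √(2 * M₁) + √(2 * M₂) + √(2 * (M₁ + M₃)) + √(2 * (M₂ + M₄)) := by
    simp [sum_range_succ, alternateSum, M]
  refine ⟨fun k C ⟨σ, hσ⟩ => ?_, alternatingConfig hpos (Equiv.swap 1 2), ?_⟩
  · rw [← hsum]
    exact hlower k C ⟨σ, fun i => (hσ i).trans (by fin_cases i <;> rfl)⟩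
  · refine ⟨?_, ?_, ?_, ?_, ?_, ?_, ?_, ?_, ?_, ?_, ?_, ?_, hmass 0, hmass 1, hmass 2, hmass 3,
      hperim.trans hsum⟩
    all_goals simp [alternatingConfig, alternatingLo, alternatingHi, innerEnd, outerEnd,
      innerRadius, outerRadius, alternateSum, Equiv.swap_apply_def, Nat.even_iff, M]
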